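/- arXiv:2405.20197 — 9 statements merged into one kernel-verified Lean document; each statement's English description precedes it below -/
import Mathlib

section
/- For every integer n ≥ 1, the monoid M_n is cancellative: for all p, q, r ∈ M_n, r·p = r·q implies p = q, and p·r = q·r implies p = q. -/
namespace Malcev

/-- The alphabet `X_n`: letters `a, b, c, d` together with `A_i, B_i, C_i, D_i`
for `i` ranging over `Fin n` (so `A ⟨0, _⟩` represents `A_1`, etc.). -/
inductive Letter (n : ℕ) : Type
  | a | b | c | d
  | A (i : Fin n) | B (i : Fin n) | C (i : Fin n) | D (i : Fin n)
  deriving DecidableEq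

open FreeMonoid

/-- The defining relations `ρ_n`. -/
inductive rel (n : ℕ) : FreeMonoid (Letter n) → FreeMonoid (Letter n) → Prop
  | da (h : 0 < n) :
      rel n (of .d * of .a) (of (.A ⟨0, h⟩) * of (.C ⟨0, h⟩))
  | AD (i : ℕ) (h : i + 1 < n) :
      rel n (of (.A ⟨i, Nat.lt_of_succ_lt h⟩) * of (.D ⟨i, Nat.lt_of_succ_lt h⟩))
            (of (.A ⟨i + 1, h⟩) * of (.C ⟨i + 1, h⟩))
  | An (h : 0 < n) :
      rel n (of (.A ⟨n - 1, Nat.sub_lt h Nat.one_pos⟩) * of (.D ⟨n - 1, Nat.sub_lt h Nat.one_pos⟩))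
            (of .d * of .b)
  | cb (h : 0 < n) :
      rel n (of .c * of .b)
            (of (.B ⟨n - 1, Nat.sub_lt h Nat.one_pos⟩) * of (.D ⟨n - 1, Nat.sub_lt h Nat.one_pos⟩))
  | BC (i : ℕ) (h : i + 1 < n) :
      rel n (of (.B ⟨i + 1, h⟩) * of (.C ⟨i + 1, h⟩))
            (of (.B ⟨i, Nat.lt_of_succ_lt h⟩) * of (.D ⟨i, Nat.lt_of_succ_lt h⟩))

/-- The congruence on the free monoid generated by `ρ_n`. -/
def Mcon (n : ℕ) : Con (FreeMonoid (Letter n)) := conGen (rel n)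

/-- The presented monoid `M_n = Mon⟨X_n | ρ_n⟩`. -/
abbrev Mn (n : ℕ) : Type := (Mcon n).Quotient

/-- The quotient (natural) map `X_n* → M_n`. -/
def mk (n : ℕ) : FreeMonoid (Letter n) →* Mn n := (Mcon n).mk'

/-- The image in `M_n` of a single letter. -/
def gen {n : ℕ} (x : Letter n) : Mn n := mk n (of x)

/-- The image in `M_n` of a word (given as a list of letters). -/
def word {n : ℕ} (w : List (Letter n)) : Mn n := mk n (ofList w)

/-- The set `P_n = {c, d, A_1, …, A_n, B_1, …, B_n}`. -/
def inP {n : ℕ} : Letter n → Prop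
  | .c => True | .d => True | .A _ => True | .B _ => True | _ => False

/-- The set `Q_n = {a, b, C_1, …, C_n, D_1, …, D_n}`. -/
def inQ {n : ℕ} : Letter n → Prop
  | .a => True | .b => True | .C _ => True | .D _ => True | _ => False

/-- `inR x y` means the two-letter word `xy` belongs to
`R_n = {db, A_1C_1, …, A_nC_n, B_1D_1, …, B_nD_n}`. -/
def inR {n : ℕ} : Letter n → Letter n → Prop
  | .d, .b => True
  | .A i, .C j => i = j
  | .B i, .D j => i = j
  | _, _ => False

/-- `inL x y` means the two-letter word `xy` belongs to
`L_n = {cb, da, A_1D_1, …, A_nD_n, B_2C_2, …, B_nC_n}`. -/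
def inL {n : ℕ} : Letter n → Letter n → Prop
  | .c, .b => True
  | .d, .a => True
  | .A i, .D j => i = j
  | .B i, .C j => i = j ∧ 1 ≤ i.val
  | _, _ => False

/-- A word is in left normal form if no two consecutive letters form a word in `R_n`. -/
def LeftNormal {n : ℕ} (w : List (Letter n)) : Prop :=
  List.Chain' (fun x y => ¬ inR x y) w

/-- `v ∈ M_n` is an intersection base if some word `a_1 ⋯ a_m` (`m ≥ 2`) in left
normal form equals `v` in `M_n` and its final two letters form a word in `L_n`. -/
def IsIntersectionBase {n : ℕ} (v : Mn n) : Prop :=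
  ∃ (w : List (Letter n)) (x y : Letter n),
    LeftNormal (w ++ [x, y]) ∧ word (w ++ [x, y]) = v ∧ inL x y

/-- The principal right ideal `pM_n`. -/
def rIdeal {n : ℕ} (p : Mn n) : Set (Mn n) := {x | ∃ m, x = p * m}


/-- `Pair x y p q` says that `(xy, pq)` is one of the defining relations, read letter by letter. -/
inductive Pair {n : ℕ} : Letter n → Letter n → Letter n → Letter n → Prop
  | da (i : Fin n) (h : i.val = 0) : Pair .d .a (.A i) (.C i)
  | AD (i j : Fin n) (h : j.val = i.val + 1) : Pair (.A i) (.D i) (.A j) (.C j)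
  | An (i : Fin n) (h : i.val + 1 = n) : Pair (.A i) (.D i) .d .b
  | cb (i : Fin n) (h : i.val + 1 = n) : Pair .c .b (.B i) (.D i)
  | BC (i j : Fin n) (h : j.val = i.val + 1) : Pair (.B j) (.C j) (.B i) (.D i)

/-- The symmetric closure of `Pair`. -/
def Swap {n : ℕ} (x y p q : Letter n) : Prop := Pair x y p q ∨ Pair p q x y

/-- `Equiv u v` says that `v` arises from `u` by exchanging disjoint two-letter factors
according to the defining relations. -/
inductive Equiv {n : ℕ} : List (Letter n) → List (Letter n) → Prop
  | nil : Equiv [] []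
  | cons (x : Letter n) {u v : List (Letter n)} : Equiv u v → Equiv (x :: u) (x :: v)
  | swap {x y p q : Letter n} {u v : List (Letter n)} :
      Swap x y p q → Equiv u v → Equiv (x :: y :: u) (p :: q :: v)

theorem exists_pair_of_rel {n : ℕ} {u v : FreeMonoid (Letter n)} (h : rel n u v) :
    ∃ x y p q, u = ofList [x, y] ∧ v = ofList [p, q] ∧ Pair x y p q := by
  cases h with
  | da h => exact ⟨_, _, _, _, rfl, rfl, .da _ rfl⟩
  | AD i h => exact ⟨_, _, _, _, rfl, rfl, .AD _ _ rfl⟩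
  | An h => exact ⟨_, _, _, _, rfl, rfl, .An _ (Nat.sub_add_cancel h)⟩
  | cb h => exact ⟨_, _, _, _, rfl, rfl, .cb _ (Nat.sub_add_cancel h)⟩
  | BC i h => exact ⟨_, _, _, _, rfl, rfl, .BC _ _ rfl⟩

theorem Pair.rel {n : ℕ} {x y p q : Letter n} (h : Pair x y p q) :
    rel n (of x * of y) (of p * of q) := by
  cases h with
  | da i h =>
    obtain ⟨i, hi⟩ := i
    obtain rfl : i = 0 := h
    exact .da hi
  | AD i j h =>
    obtain ⟨i, hi⟩ := i
    obtain ⟨j, hj⟩ := j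
    obtain rfl : j = i + 1 := h
    exact .AD i hj
  | An i h =>
    obtain ⟨i, hi⟩ := i
    obtain rfl : i = n - 1 := Nat.eq_sub_of_add_eq h
    exact .An (Nat.zero_lt_of_lt hi)
  | cb i h =>
    obtain ⟨i, hi⟩ := i
    obtain rfl : i = n - 1 := Nat.eq_sub_of_add_eq h
    exact .cb (Nat.zero_lt_of_lt hi)
  | BC i j h =>
    obtain ⟨i, hi⟩ := i
    obtain ⟨j, hj⟩ := j
    obtain rfl : j = i + 1 := h
    exact .BC i hj

namespace Swap

variable {n : ℕ} {x y p q r s t : Letter n}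

theorem symm (h : Swap x y p q) : Swap p q x y := Or.symm h

theorem fst_ne (h : Swap x y p q) : x ≠ p := by
  rintro rfl
  rcases h with h | h <;> cases h <;> omega

theorem snd_ne (h : Swap x y p q) : y ≠ q := by
  rintro rfl
  rcases h with h | h <;> cases h

theorem not_overlap (h : Swap x y p q) : ¬ Swap y r s t := by
  rcases h with h | h <;> cases h <;> rintro (h | h) <;> cases h

theorem eq_of_swap (h : Swap x y p q) (h' : Swap p q r s) : r = x ∧ s = y := by
  rcases h with h | h <;> cases h <;> rcases h' with h' | h' <;> cases h' <;>
    simp only [Letter.A.injEq, Letter.B.injEq, Letter.C.injEq, Letter.D.injEq, Fin.ext_iff,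
      and_self, reduceCtorEq] <;> omega

end Swap

namespace Equiv

variable {n : ℕ} {u v w u' v' : List (Letter n)}

theorem refl : ∀ u : List (Letter n), Equiv u u
  | [] => .nil
  | x :: u => .cons x (refl u)

theorem symm (h : Equiv u v) : Equiv v u := by
  induction h with
  | nil => exact .nil
  | cons x _ ih => exact .cons x ih
  | swap hs _ ih => exact .swap hs.symm ih

theorem of_cons {x : Letter n} (h : Equiv (x :: u) (x :: v)) : Equiv u v := by
  cases h with
  | cons _ h => exact h
  | swap hs _ => exact absurd rfl hs.fst_ne

theorem trans (h : Equiv u v) (h' : Equiv v w) : Equiv u w := by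
  induction h generalizing w with
  | nil => exact h'
  | cons x h ih =>
    cases h' with
    | cons _ h' => exact .cons x (ih h')
    | swap hs h' =>
      cases h with
      | cons _ h => exact .swap hs (ih (.cons _ h')).of_cons
      | swap ht h => exact absurd ht.symm hs.not_overlap
  | swap hs h ih =>
    cases h' with
    | cons _ h' =>
      cases h' with
      | cons _ h' => exact .swap hs (ih h')
      | swap ht h' => exact absurd ht hs.symm.not_overlap
    | swap ht h' =>
      obtain ⟨rfl, rfl⟩ := hs.eq_of_swap ht
      exact .cons _ (.cons _ (ih h'))

theorem append (h : Equiv u v) (h' : Equiv u' v') : Equiv (u ++ u') (v ++ v') := by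
  induction h with
  | nil => exact h'
  | cons x _ ih => exact .cons x ih
  | swap hs _ ih => exact .swap hs ih

theorem length_eq (h : Equiv u v) : u.length = v.length := by
  induction h with
  | nil => rfl
  | cons x _ ih => simp [ih]
  | swap hs _ ih => simp [ih]

theorem of_append_left (r : List (Letter n)) (h : Equiv (r ++ u) (r ++ v)) : Equiv u v := by
  induction r with
  | nil => exact h
  | cons x r ih => exact ih h.of_cons

theorem of_append_singleton {x : Letter n} (h : Equiv (u ++ [x]) (v ++ [x])) : Equiv u v := by
  generalize hs : u ++ [x] = s at h
  generalize ht : v ++ [x] = t at h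
  induction h generalizing u v with
  | nil => simp at hs
  | cons z h ih =>
    have hl := h.length_eq
    rcases u with _ | ⟨z', u⟩ <;> rcases v with _ | ⟨z'', v⟩ <;>
      simp only [List.nil_append, List.cons_append, List.cons.injEq] at hs ht
    · exact .nil
    · simp [← hs.2, ← ht.2] at hl
    · simp [← hs.2, ← ht.2] at hl
    · rw [hs.1, ht.1]
      exact .cons z (ih hs.2 ht.2)
  | swap hw h ih =>
    have hl := h.length_eq
    rcases u with _ | ⟨_, _ | ⟨_, u⟩⟩ <;> rcases v with _ | ⟨_, _ | ⟨_, v⟩⟩ <;>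
      simp only [List.nil_append, List.cons_append, List.cons.injEq, reduceCtorEq,
        and_false] at hs ht
    · exact absurd (hs.2.1.symm.trans ht.2.1) hw.snd_ne
    · simp [← hs.2.2, ← ht.2.2] at hl
    · simp [← hs.2.2, ← ht.2.2] at hl
    · rw [hs.1, hs.2.1, ht.1, ht.2.1]
      exact .swap hw (ih hs.2.2 ht.2.2)

theorem of_append_right (r : List (Letter n)) (h : Equiv (u ++ r) (v ++ r)) : Equiv u v := by
  induction r generalizing u v with
  | nil => simpa using h
  | cons x r ih =>
    refine of_append_singleton (x := x) (ih ?_)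
    simpa using h

end Equiv

/-- `Equiv` as a congruence on the free monoid. -/
def equivCon (n : ℕ) : Con (FreeMonoid (Letter n)) where
  r u v := Equiv u.toList v.toList
  iseqv := ⟨fun u => Equiv.refl u.toList, Equiv.symm, Equiv.trans⟩
  mul' := Equiv.append

theorem Mcon_of_equiv {n : ℕ} {u v : List (Letter n)} (h : Equiv u v) :
    Mcon n (ofList u) (ofList v) := by
  induction h with
  | nil => exact (Mcon n).refl _
  | cons x _ ih => exact (Mcon n).mul ((Mcon n).refl (of x)) ih
  | swap hs _ ih =>
    refine (Mcon n).mul (w := of _ * of _) (x := of _ * of _) ?_ ih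
    rcases hs with hs | hs
    · exact ConGen.Rel.of _ _ hs.rel
    · exact (Mcon n).symm (ConGen.Rel.of _ _ hs.rel)

theorem Mcon_iff_equiv {n : ℕ} {u v : FreeMonoid (Letter n)} :
    Mcon n u v ↔ Equiv u.toList v.toList := by
  refine ⟨fun h => ?_, fun h => Mcon_of_equiv h⟩
  have hle : Mcon n ≤ equivCon n := Con.conGen_le.2 fun u v h => by
    obtain ⟨x, y, p, q, rfl, rfl, hp⟩ := exists_pair_of_rel h
    exact Equiv.swap (.inl hp) .nil
  exact hle h

/-- For every `n ≥ 1`, the monoid `M_n` is cancellative. -/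
theorem Mn_cancellative (n : ℕ) (hn : 1 ≤ n) :
    ∀ p q r : Mn n, (r * p = r * q → p = q) ∧ (p * r = q * r → p = q) := by
  intro p q r
  induction p using Con.induction_on with | _ p
  induction q using Con.induction_on with | _ q
  induction r using Con.induction_on with | _ r
  simp only [← Con.coe_mul, Con.eq, Mcon_iff_equiv, toList_mul]
  exact ⟨Equiv.of_append_left _, Equiv.of_append_right _⟩

end Malcev
end

section
/- For every integer n ≥ 1, the monoid M_n is not group-embeddable: for every group G and every monoid homomorphism φ : M_n → G, φ is not injective. -/
namespace Malcev

open FreeMonoid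

theorem gen_mul_gen_eq_of_rel {n : ℕ} {x y z w : Letter n}
    (h : rel n (of x * of y) (of z * of w)) : gen x * gen y = gen z * gen w := by
  rw [gen, gen, gen, gen, ← map_mul, ← map_mul]
  exact (Con.eq (Mcon n)).2 (ConGen.Rel.of _ _ h)

/-- The homomorphism sending `a` and `c` to `1` and every other letter to `0`. -/
def indicatorAC (n : ℕ) : Mn n →* ℕ :=
  (Mcon n).lift (FreeMonoid.lift fun x : Letter n => match x with
    | .a => 1
    | .c => 1
    | _ => 0) <| Con.conGen_le.2 fun _ _ h => by
      cases h <;> simp [Con.ker_rel]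

theorem gen_c_mul_gen_a_ne {n : ℕ} (i j : Fin n) :
    (gen .c * gen .a : Mn n) ≠ gen (.B i) * gen (.C j) := by
  intro h
  have image_eq := congrArg (indicatorAC n) h
  exact one_ne_zero (α := ℕ) image_eq

/-- In any group receiving `M_n`, all the quotients `B_i A_i⁻¹` agree with `B_1 A_1⁻¹`. -/
theorem map_B_div_map_A {n : ℕ} {G : Type*} [Group G] (φ : Mn n →* G) (h0 : 0 < n)
    (i : ℕ) (hi : i < n) :
    φ (gen (.B ⟨i, hi⟩)) / φ (gen (.A ⟨i, hi⟩)) =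
      φ (gen (.B ⟨0, h0⟩)) / φ (gen (.A ⟨0, h0⟩)) := by
  induction i with
  | zero => rfl
  | succ i ih =>
    rw [← ih (Nat.lt_of_succ_lt hi)]
    have hA := congrArg φ (gen_mul_gen_eq_of_rel (rel.AD i hi))
    have hB := congrArg φ (gen_mul_gen_eq_of_rel (rel.BC i hi))
    simp only [map_mul] at hA hB
    rw [← mul_div_mul_right_eq_div _ _ (φ (gen (.C ⟨i + 1, hi⟩))), hB, ← hA,
      mul_div_mul_right_eq_div]

/-- Every homomorphism from `M_n` to a group identifies `ca` with `B_1 C_1`. -/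
theorem map_gen_c_mul_gen_a {n : ℕ} {G : Type*} [Group G] (φ : Mn n →* G) (h0 : 0 < n) :
    φ (gen .c * gen .a) = φ (gen (.B ⟨0, h0⟩) * gen (.C ⟨0, h0⟩)) := by
  have hda := congrArg φ (gen_mul_gen_eq_of_rel (rel.da h0))
  have hdb := congrArg φ (gen_mul_gen_eq_of_rel (rel.An h0))
  have hcb := congrArg φ (gen_mul_gen_eq_of_rel (rel.cb h0))
  have hBA := map_B_div_map_A φ h0 (n - 1) (Nat.sub_lt h0 Nat.one_pos)
  simp only [map_mul] at hda hdb hcb ⊢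
  have hcd : φ (gen .c) / φ (gen .d) = φ (gen (.B ⟨0, h0⟩)) / φ (gen (.A ⟨0, h0⟩)) := by
    rw [← hBA, ← mul_div_mul_right_eq_div _ _ (φ (gen .b)), hcb, ← hdb,
      mul_div_mul_right_eq_div]
  calc φ (gen .c) * φ (gen .a)
      = φ (gen .c) / φ (gen .d) * (φ (gen .d) * φ (gen .a)) := by
        rw [← mul_assoc, div_mul_cancel]
    _ = φ (gen (.B ⟨0, h0⟩)) * φ (gen (.C ⟨0, h0⟩)) := by
        rw [hcd, hda, ← mul_assoc, div_mul_cancel]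

/-- For every `n ≥ 1`, `M_n` is not group-embeddable. -/
theorem Mn_not_group_embeddable (n : ℕ) (hn : 1 ≤ n)
    (G : Type*) [Group G] (φ : Mn n →* G) : ¬ Function.Injective φ := by
  intro hφ
  exact gen_c_mul_gen_a_ne _ _ (hφ (map_gen_c_mul_gen_a φ hn))

end Malcev
end

section
/- Let n ≥ 1 and let w, w' be words over X_n that are equal in M_n. Then: (1) w and w' have the same length; (2) for each index i, the i-th letter of w lies in P_n if and only if the i-th letter of w' lies in P_n; (3) for each index i, the i-th letter of w lies in Q_n if and only if the i-th letter of w' lies in Q_n. -/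
namespace Malcev

open FreeMonoid

/-- The map replacing each letter by its membership in `P_n` and `Q_n` respects the
defining relations, so it identifies words that are equal in `M_n`. -/
theorem map_inP_inQ_eq {n : ℕ} {w w' : List (Letter n)} (h : word w = word w') :
    w.map (fun x => (inP x, inQ x)) = w'.map (fun x => (inP x, inQ x)) := by
  have hle : Mcon n ≤ Con.ker (FreeMonoid.map fun x : Letter n => (inP x, inQ x)) := by
    refine Con.conGen_le.2 fun x y hxy => ?_
    rw [Con.ker_rel]
    cases hxy <;> simp only [map_mul, FreeMonoid.map_of, inP, inQ]
  exact hle ((Con.eq _).1 h)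

/-- words equal in `M_n` have the same length and matching
`P_n`/`Q_n` positions. -/
theorem Mn_length_and_PQ_invariant (n : ℕ) (hn : 1 ≤ n)
    (w w' : List (Letter n)) (h : word w = word w') :
    w.length = w'.length ∧
    (∀ (i : ℕ) (h1 : i < w.length) (h2 : i < w'.length),
      (inP (w[i]'h1) ↔ inP (w'[i]'h2)) ∧ (inQ (w[i]'h1) ↔ inQ (w'[i]'h2))) := by
  have hmap := map_inP_inQ_eq h
  refine ⟨by simpa using congrArg List.length hmap, fun i h1 h2 => ?_⟩
  have hi := List.getElem_of_eq hmap (i := i) (by simpa using h1)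
  simp only [List.getElem_map, Prod.mk.injEq] at hi
  exact ⟨iff_of_eq hi.1, iff_of_eq hi.2⟩

end Malcev
end

section
/- For every integer n ≥ 1 and every word w over X_n, there exists a unique word w' in left normal form such that w and w' are equal in M_n. -/
namespace Malcev

open FreeMonoid

section

variable {n : ℕ}

/-- The word of `L_n` rewritten by `ρ_n` into a given two-letter word; it is `none` if the given
word does not lie in `R_n`. -/
def contract : Letter n → Letter n → Option (Letter n × Letter n)
  | .d, .b => if h : 0 < n then
      some (.A ⟨n - 1, Nat.sub_lt h Nat.one_pos⟩, .D ⟨n - 1, Nat.sub_lt h Nat.one_pos⟩) else none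
  | .A i, .C j => if i = j then
      if i.val = 0 then some (.d, .a)
      else some (.A ⟨i - 1, by omega⟩, .D ⟨i - 1, by omega⟩)
      else none
  | .B i, .D j => if i = j then
      if h : i.val + 1 < n then some (.B ⟨i + 1, h⟩, .C ⟨i + 1, h⟩) else some (.c, .b)
      else none
  | _, _ => none

/-- The left normal form of a word, obtained by contracting every factor lying in `R_n`. -/
def leftForm : List (Letter n) → List (Letter n)
  | [] => []
  | [x] => [x]
  | x :: y :: l =>
    match contract x y with
    | some p => p.1 :: p.2 :: leftForm l
    | none => x :: leftForm (y :: l)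

theorem inR.inP_left {x y : Letter n} (h : inR x y) : inP x := by
  cases x <;> cases y <;> simp_all [inR, inP]

theorem inR.inQ_right {x y : Letter n} (h : inR x y) : inQ y := by
  cases x <;> cases y <;> simp_all [inR, inQ]

theorem inP.not_inQ {x : Letter n} (h : inP x) : ¬ inQ x := by
  cases x <;> simp_all [inP, inQ]

theorem contract_eq_none_iff (hn : 1 ≤ n) {x y : Letter n} :
    contract x y = none ↔ ¬ inR x y := by
  cases x <;> cases y <;> simp [contract, inR] <;> grind

theorem contract_eq_none_of_inQ {x : Letter n} (hx : inQ x) (y : Letter n) :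
    contract x y = none := by
  cases x <;> cases y <;> simp_all [contract, inQ]

theorem contract_eq_none_of_inP (x : Letter n) {y : Letter n} (hy : inP y) :
    contract x y = none := by
  cases x <;> cases y <;> simp_all [contract, inP]

theorem inP_fst_of_contract {x y : Letter n} {p : Letter n × Letter n}
    (h : contract x y = some p) : inP p.1 := by
  cases x <;> cases y <;> simp only [contract] at h <;> grind [inP]

theorem inQ_snd_of_contract {x y : Letter n} {p : Letter n × Letter n}
    (h : contract x y = some p) : inQ p.2 := by
  cases x <;> cases y <;> simp only [contract] at h <;> grind [inQ]

theorem not_inR_of_contract {x y : Letter n} {p : Letter n × Letter n}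
    (h : contract x y = some p) : ¬ inR p.1 p.2 := by
  cases x <;> cases y <;> simp only [contract] at h <;> grind [inR]

theorem rel_of_contract {x y : Letter n} {p : Letter n × Letter n}
    (h : contract x y = some p) : rel n (of p.1 * of p.2) (of x * of y) := by
  cases x <;> cases y <;> simp only [contract, reduceCtorEq] at h
  case d.b =>
    split_ifs at h with hn
    cases h
    exact .An hn
  case A.C i j =>
    split_ifs at h with hij hi
    · subst hij
      obtain ⟨i, hin⟩ := i
      cases h
      subst hi
      exact .da hin
    · subst hij
      obtain ⟨_ | i, hin⟩ := i
      · exact absurd rfl hi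
      · cases h
        exact .AD i hin
  case B.D i j =>
    split_ifs at h with hij hi
    · cases h
      subst hij
      exact .BC i hi
    · cases h
      subst hij
      have hn : 0 < n := i.pos
      obtain rfl : i = ⟨n - 1, Nat.sub_lt hn Nat.one_pos⟩ := Fin.ext (by grind)
      exact .cb hn

/-- Every defining relation is the expansion of a contraction. -/
theorem exists_contract_of_rel {u v : FreeMonoid (Letter n)} (h : rel n u v) :
    ∃ (x y : Letter n) (p : Letter n × Letter n), contract x y = some p ∧
      u = of p.1 * of p.2 ∧ v = of x * of y := by
  cases h with
  | da h => exact ⟨_, _, (_, _), by simp [contract], rfl, rfl⟩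
  | AD i h => exact ⟨_, _, (_, _), by simp [contract], rfl, rfl⟩
  | An h => exact ⟨_, _, (_, _), by simp [contract, h], rfl, rfl⟩
  | cb h =>
    refine ⟨_, _, (.c, .b), ?_, rfl, rfl⟩
    simp [contract]
    omega
  | BC i h => exact ⟨_, _, (_, _), by simp [contract, h], rfl, rfl⟩

theorem leftForm_cons_cons_of_some {x y : Letter n} {p : Letter n × Letter n}
    (h : contract x y = some p) (l : List (Letter n)) :
    leftForm (x :: y :: l) = p.1 :: p.2 :: leftForm l := by
  rw [leftForm, h]

theorem leftForm_cons_cons_of_none {x y : Letter n} (h : contract x y = none)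
    (l : List (Letter n)) : leftForm (x :: y :: l) = x :: leftForm (y :: l) := by
  rw [leftForm, h]

theorem leftForm_cons_of_inQ {x : Letter n} (hx : inQ x) (l : List (Letter n)) :
    leftForm (x :: l) = x :: leftForm l := by
  cases l with
  | nil => simp [leftForm]
  | cons y l => exact leftForm_cons_cons_of_none (contract_eq_none_of_inQ hx y) l

theorem leftForm_append_cons_of_inP {x : Letter n} (hx : inP x) (r l : List (Letter n)) :
    leftForm (l ++ x :: r) = leftForm l ++ leftForm (x :: r) := by
  induction l using leftForm.induct with
  | case1 => simp [leftForm]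
  | case2 y => simp [leftForm, contract_eq_none_of_inP y hx]
  | case3 y z l p h ih =>
    simp only [List.cons_append, leftForm_cons_cons_of_some h, ih]
  | case4 y z l h ih =>
    simp only [List.cons_append, leftForm_cons_cons_of_none h] at ih ⊢
    rw [ih]

theorem not_inR_head?_leftForm {x y : Letter n} (h : ¬ inR x y) (l : List (Letter n)) :
    ∀ z ∈ (leftForm (y :: l)).head?, ¬ inR x z := by
  intro z hz
  cases l with
  | nil => simp_all [leftForm]
  | cons t l =>
    cases hc : contract y t with
    | none => simp_all [leftForm_cons_cons_of_none hc]
    | some p =>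
      obtain rfl : p.1 = z := by simpa [leftForm_cons_cons_of_some hc] using hz
      exact fun hR => (inP_fst_of_contract hc).not_inQ hR.inQ_right

theorem leftNormal_leftForm (hn : 1 ≤ n) (l : List (Letter n)) : LeftNormal (leftForm l) := by
  unfold LeftNormal
  induction l using leftForm.induct with
  | case1 => exact .nil
  | case2 y => exact .singleton y
  | case3 y z l p h ih =>
    rw [leftForm_cons_cons_of_some h]
    refine List.IsChain.cons_cons (not_inR_of_contract h) (List.isChain_cons.2 ⟨?_, ih⟩)
    exact fun t _ hR => hR.inP_left.not_inQ (inQ_snd_of_contract h)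
  | case4 y z l h ih =>
    rw [leftForm_cons_cons_of_none h]
    exact List.isChain_cons.2 ⟨not_inR_head?_leftForm ((contract_eq_none_iff hn).1 h) l, ih⟩

theorem leftForm_eq_self (hn : 1 ≤ n) {l : List (Letter n)} (h : LeftNormal l) :
    leftForm l = l := by
  unfold LeftNormal at h
  induction l using leftForm.induct with
  | case1 => simp [leftForm]
  | case2 y => simp [leftForm]
  | case3 y z l p hp ih =>
    have := (contract_eq_none_iff hn).2 (List.isChain_cons_cons.1 h).1
    simp_all
  | case4 y z l hp ih =>
    rw [leftForm_cons_cons_of_none hp, ih (List.isChain_cons_cons.1 h).2]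

theorem mk_eq_of_rel {u v : FreeMonoid (Letter n)} (h : rel n u v) : mk n u = mk n v :=
  (Con.eq _).2 (ConGen.Rel.of _ _ h)

theorem word_cons (x : Letter n) (l : List (Letter n)) : word (x :: l) = gen x * word l := by
  rw [word, ofList_cons, map_mul]
  rfl

theorem word_leftForm (l : List (Letter n)) : word (leftForm l) = word l := by
  induction l using leftForm.induct with
  | case1 => simp [leftForm]
  | case2 y => simp [leftForm]
  | case3 y z l p h ih =>
    have hp : gen p.1 * gen p.2 = gen y * gen z := by
      simpa only [gen, map_mul] using mk_eq_of_rel (rel_of_contract h)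
    simp only [leftForm_cons_cons_of_some h, word_cons, ih, ← mul_assoc, hp]
  | case4 y z l h ih => rw [leftForm_cons_cons_of_none h, word_cons, ih, ← word_cons]

/-- The syntactic congruence of the left normal form. -/
def leftFormCon (n : ℕ) : Con (FreeMonoid (Letter n)) where
  r u v := ∀ s t : List (Letter n),
    leftForm (s ++ (toList u ++ t)) = leftForm (s ++ (toList v ++ t))
  iseqv := ⟨fun _ _ _ => rfl, fun h s t => (h s t).symm,
    fun h k s t => (h s t).trans (k s t)⟩
  mul' {u v u' v'} h k s t := by
    have h₁ := h s (toList u' ++ t)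
    have h₂ := k (s ++ toList v) t
    simp only [toList_mul, List.append_assoc] at h₁ h₂ ⊢
    exact h₁.trans h₂

theorem Mcon_le_leftFormCon (hn : 1 ≤ n) : Mcon n ≤ leftFormCon n := by
  refine Con.conGen_le.2 fun u v h => ?_
  obtain ⟨x, y, p, hp, rfl, rfl⟩ := exists_contract_of_rel h
  intro s t
  have hR : inR x y := by
    by_contra hR
    simp [(contract_eq_none_iff hn).2 hR] at hp
  simp only [toList_mul, toList_of, List.cons_append, List.nil_append]
  rw [leftForm_append_cons_of_inP (inP_fst_of_contract hp),
    leftForm_append_cons_of_inP hR.inP_left, leftForm_cons_cons_of_some hp,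
    leftForm_cons_cons_of_none ((contract_eq_none_iff hn).2 (not_inR_of_contract hp)),
    leftForm_cons_of_inQ (inQ_snd_of_contract hp)]

theorem leftForm_eq_of_word_eq (hn : 1 ≤ n) {u v : List (Letter n)} (h : word u = word v) :
    leftForm u = leftForm v := by
  simpa using Mcon_le_leftFormCon hn ((Con.eq _).1 h) [] []

end

/-- every word has a unique left normal form. -/
theorem Mn_left_normal_form (n : ℕ) (hn : 1 ≤ n) (w : List (Letter n)) :
    ∃! w' : List (Letter n), LeftNormal w' ∧ word w = word w' := by
  refine ⟨leftForm w, ⟨leftNormal_leftForm hn w, (word_leftForm w).symm⟩, ?_⟩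
  rintro v ⟨hv, h⟩
  rw [← leftForm_eq_self hn hv, leftForm_eq_of_word_eq hn h]

end Malcev
end

section
/- Let n ≥ 1 and let v ∈ M_n. There exist u_1, u_2 ∈ M_n and letters x_1, x_2 ∈ X_n with (u_1, x_1) ≠ (u_2, x_2), u_1·x_1 = v and u_2·x_2 = v (i.e. v has in-degree at least 2 in the Cayley graph of M_n with respect to X_n) if and only if v is an intersection base. -/
namespace Malcev

open FreeMonoid

variable {n : ℕ}

theorem word_append (u w : List (Letter n)) : word (u ++ w) = word u * word w := by
  simp [word, ofList_append]

theorem word_singleton (x : Letter n) : word [x] = gen x := rfl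

theorem word_surjective : Function.Surjective (word (n := n)) := fun v => by
  obtain ⟨w, rfl⟩ := Con.mk'_surjective (c := Mcon n) v
  exact ⟨toList w, rfl⟩

theorem word_pair_eq_of_rel {x y z t : Letter n} (h : rel n (of x * of y) (of z * of t)) :
    word [x, y] = word [z, t] :=
  (Con.eq _).2 (ConGen.Rel.of _ _ h)

/-- Prepend a letter to a word, rewriting a word of `R_n` created at the front to the
corresponding word of `L_n`. -/
def reduceCons : Letter n → List (Letter n) → List (Letter n)
  | .d, .b :: w =>
    if h : 0 < n then
      .A ⟨n - 1, Nat.sub_lt h Nat.one_pos⟩ :: .D ⟨n - 1, Nat.sub_lt h Nat.one_pos⟩ :: w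
    else .d :: .b :: w
  | .A i, .C j :: w =>
    if i = j then
      if i.val = 0 then .d :: .a :: w
      else .A ⟨i.val - 1, by omega⟩ :: .D ⟨i.val - 1, by omega⟩ :: w
    else .A i :: .C j :: w
  | .B i, .D j :: w =>
    if i = j then
      if h : i.val + 1 < n then .B ⟨i.val + 1, h⟩ :: .C ⟨i.val + 1, h⟩ :: w
      else .c :: .b :: w
    else .B i :: .D j :: w
  | x, w => x :: w

/-- The action of the free monoid on words by successive reduced prepending. -/
def reduceHom (n : ℕ) : FreeMonoid (Letter n) →* Function.End (List (Letter n)) :=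
  FreeMonoid.lift reduceCons

theorem reduceHom_of_apply (x : Letter n) (w : List (Letter n)) :
    reduceHom n (of x) w = reduceCons x w :=
  rfl

theorem reduceHom_mul_apply (u v : FreeMonoid (Letter n)) (w : List (Letter n)) :
    reduceHom n (u * v) w = reduceHom n u (reduceHom n v w) :=
  congrFun (map_mul (reduceHom n) u v) w

theorem Mcon_le_ker_reduceHom : Mcon n ≤ Con.ker (reduceHom n) := by
  refine Con.conGen_le.2 fun x y h => ?_
  rw [Con.ker_rel]
  funext w
  cases h with
  | da h | AD i h | An h | BC i h =>
    simp [reduceHom_mul_apply, reduceHom_of_apply, reduceCons, *]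
  | cb h => simp [reduceHom_mul_apply, reduceHom_of_apply, reduceCons, Nat.sub_add_cancel h]

theorem reduceCons_of_not_inR {x y : Letter n} (h : ¬ inR x y) (w : List (Letter n)) :
    reduceCons x (y :: w) = x :: y :: w := by
  cases x <;> cases y <;> simp_all [reduceCons, inR]

theorem reduceCons_nil (x : Letter n) : reduceCons x [] = [x] := by
  cases x <;> rfl

theorem LeftNormal.reduceHom_eq {w : List (Letter n)} (h : LeftNormal w) :
    reduceHom n (ofList w) [] = w := by
  induction w with
  | nil => rfl
  | cons x w ih =>
    have hw : reduceHom n (ofList w) [] = w := ih (List.IsChain.tail h)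
    rw [ofList_cons, reduceHom_mul_apply, reduceHom_of_apply, hw]
    cases w with
    | nil => exact reduceCons_nil x
    | cons y w => exact reduceCons_of_not_inR (List.isChain_cons_cons.1 h).1 w

/-- Left normal forms are unique. -/
theorem LeftNormal.eq_of_word_eq {u w : List (Letter n)} (hu : LeftNormal u)
    (hw : LeftNormal w) (h : word u = word w) : u = w := by
  have hker : reduceHom n (ofList u) = reduceHom n (ofList w) :=
    Mcon_le_ker_reduceHom ((Con.eq _).1 h)
  rw [← hu.reduceHom_eq, hker, hw.reduceHom_eq]

theorem not_inR_of_inL {x y : Letter n} (h : inL x y) : ¬ inR x y := by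
  cases x <;> cases y <;> simp_all [inL, inR]

theorem not_inR_of_inL_right {x y : Letter n} (h : inL x y) (z : Letter n) : ¬ inR z x := by
  cases x <;> cases z <;> simp_all [inL, inR]

theorem exists_inL_of_inR (hn : 0 < n) {x y : Letter n} (h : inR x y) :
    ∃ z t, word [x, y] = word [z, t] ∧ inL z t := by
  match x, y, h with
  | .d, .b, _ => exact ⟨_, _, (word_pair_eq_of_rel (.An hn)).symm, rfl⟩
  | .A ⟨0, hi⟩, .C _, rfl => exact ⟨.d, .a, (word_pair_eq_of_rel (.da hi)).symm, trivial⟩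
  | .A ⟨i + 1, hi⟩, .C _, rfl => exact ⟨_, _, (word_pair_eq_of_rel (.AD i hi)).symm, rfl⟩
  | .B ⟨i, hi⟩, .D _, rfl =>
    by_cases h : i + 1 < n
    · exact ⟨_, _, (word_pair_eq_of_rel (.BC i h)).symm, ⟨rfl, by simp⟩⟩
    · obtain rfl : i = n - 1 := by omega
      exact ⟨.c, .b, (word_pair_eq_of_rel (.cb (by omega))).symm, trivial⟩

theorem exists_word_pair_eq_of_inL (hn : 0 < n) {x y : Letter n} (h : inL x y) :
    ∃ z t, word [x, y] = word [z, t] ∧ t ≠ y := by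
  match x, y, h with
  | .c, .b, _ => exact ⟨_, _, word_pair_eq_of_rel (.cb hn), nofun⟩
  | .d, .a, _ => exact ⟨_, _, word_pair_eq_of_rel (.da hn), nofun⟩
  | .A ⟨i, hi⟩, .D _, rfl =>
    by_cases h : i + 1 < n
    · exact ⟨_, _, word_pair_eq_of_rel (.AD i h), nofun⟩
    · obtain rfl : i = n - 1 := by omega
      exact ⟨_, _, word_pair_eq_of_rel (.An hn), nofun⟩
  | .B ⟨i + 1, hi⟩, .C _, ⟨rfl, _⟩ => exact ⟨_, _, word_pair_eq_of_rel (.BC i hi), nofun⟩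

/-- Appending a letter to a left normal word gives a left normal word or an intersection base. -/
theorem LeftNormal.append_singleton_or (hn : 0 < n) {w : List (Letter n)} (hw : LeftNormal w)
    (x : Letter n) : LeftNormal (w ++ [x]) ∨ IsIntersectionBase (word w * gen x) := by
  rcases List.eq_nil_or_concat w with rfl | ⟨u, y, rfl⟩
  · exact .inl (List.isChain_singleton x)
  rw [List.concat_eq_append] at *
  by_cases h : inR y x
  · obtain ⟨z, t, heq, hzt⟩ := exists_inL_of_inR hn h
    refine .inr ⟨u, z, t, ?_, ?_, hzt⟩
    · refine List.isChain_append.2 ⟨(List.isChain_append.1 hw).1, ?_, ?_⟩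
      · simpa using not_inR_of_inL hzt
      · simpa using fun s _ => not_inR_of_inL_right hzt s
    · rw [word_append, ← heq, ← word_singleton, ← word_append, ← word_append,
        List.append_assoc, List.singleton_append]
  · refine .inl (List.isChain_append.2 ⟨hw, List.isChain_singleton x, ?_⟩)
    simpa using h

theorem exists_leftNormal_word_eq (hn : 0 < n) (v : Mn n) : ∃ w, LeftNormal w ∧ word w = v := by
  obtain ⟨w, rfl⟩ := word_surjective v
  induction w using List.reverseRecOn with
  | nil => exact ⟨[], List.isChain_nil, rfl⟩
  | append_singleton w x ih =>
    obtain ⟨u, hu, heq⟩ := ih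
    rw [word_append, word_singleton, ← heq]
    rcases hu.append_singleton_or hn x with h | ⟨u', y, z, h, h', -⟩
    · exact ⟨_, h, by rw [word_append, word_singleton]⟩
    · exact ⟨_, h, h'⟩

/-- `v` has in-degree at least `2` in the Cayley graph iff
`v` is an intersection base. -/
theorem Mn_indegree_two_iff_intersection_base (n : ℕ) (hn : 1 ≤ n) (v : Mn n) :
    (∃ (u₁ u₂ : Mn n) (x₁ x₂ : Letter n),
      (u₁, x₁) ≠ (u₂, x₂) ∧ u₁ * gen x₁ = v ∧ u₂ * gen x₂ = v) ↔
    IsIntersectionBase v := by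
  constructor
  · rintro ⟨u₁, u₂, x₁, x₂, hne, rfl, h⟩
    obtain ⟨w₁, hw₁, rfl⟩ := exists_leftNormal_word_eq hn u₁
    obtain ⟨w₂, hw₂, rfl⟩ := exists_leftNormal_word_eq hn u₂
    rcases hw₁.append_singleton_or hn x₁ with h₁ | h₁
    · rcases hw₂.append_singleton_or hn x₂ with h₂ | h₂
      · have heq := h₁.eq_of_word_eq h₂
          (by rw [word_append, word_append, word_singleton, word_singleton, h])
        obtain ⟨rfl, hx⟩ := List.append_inj' heq rfl
        exact absurd (by simp_all) hne
      · rwa [← h]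
    · exact h₁
  · rintro ⟨w, x, y, -, rfl, hxy⟩
    obtain ⟨z, t, heq, hty⟩ := exists_word_pair_eq_of_inL hn hxy
    refine ⟨word (w ++ [x]), word (w ++ [z]), y, t, fun h => hty (Prod.ext_iff.1 h).2.symm,
      ?_, ?_⟩
    · rw [← word_singleton, ← word_append, List.append_assoc, List.singleton_append]
    · rw [← word_singleton, ← word_append, List.append_assoc, List.singleton_append,
        word_append, word_append, heq]

end Malcev
end

section
/- Let n ≥ 1. If v ∈ M_n is an intersection base and u·x = v for some u ∈ M_n and some letter x ∈ X_n, then x ∈ Q_n. -/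
namespace Malcev

open FreeMonoid

/-- A word acts on `Prop` from the right; a letter `x` sends everything to `inQ x`, so a nonempty
word sends everything to the statement that its last letter lies in `Q_n`. -/
def lastQ (n : ℕ) : FreeMonoid (Letter n) →* (Function.End Prop)ᵐᵒᵖ :=
  FreeMonoid.lift fun x => MulOpposite.op fun _ => inQ x

theorem lastQ_mul_of {n : ℕ} (w : FreeMonoid (Letter n)) (x : Letter n) :
    lastQ n (w * of x) = MulOpposite.op fun _ => inQ x := by
  rw [map_mul, lastQ, FreeMonoid.lift_eval_of]
  rfl

/-- Both sides of every defining relation end in a letter of `Q_n`. -/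
theorem Mcon_le_ker_lastQ (n : ℕ) : Mcon n ≤ Con.ker (lastQ n) := by
  refine Con.conGen_le.mpr fun s t hst => ?_
  rw [Con.ker_rel]
  cases hst <;> rw [lastQ_mul_of, lastQ_mul_of] <;> rfl

/-- The letters of `Q_n` as last letters are detected in `M_n`. -/
theorem inQ_iff_of_mk_mul_of_eq {n : ℕ} {s t : FreeMonoid (Letter n)} {x y : Letter n}
    (h : mk n (s * of x) = mk n (t * of y)) : inQ x ↔ inQ y := by
  have h' := Mcon_le_ker_lastQ n ((Con.eq _).mp h)
  rw [Con.ker_rel, lastQ_mul_of, lastQ_mul_of] at h'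
  exact iff_of_eq (congrFun (MulOpposite.op_injective h') True)

theorem inQ_of_inL {n : ℕ} {x y : Letter n} (h : inL x y) : inQ y := by
  cases x <;> cases y <;> simp_all [inL, inQ]

/-- any edge into an intersection base is labelled by a letter of `Q_n`. -/
theorem Mn_edge_into_intersection_base (n : ℕ) (hn : 1 ≤ n)
    (v : Mn n) (hv : IsIntersectionBase v)
    (u : Mn n) (x : Letter n) (h : u * gen x = v) : inQ x := by
  obtain ⟨w, y, z, -, hw, hL⟩ := hv
  obtain ⟨s, rfl⟩ := Con.mk'_surjective u
  have key : mk n (s * of x) = mk n (ofList (w ++ [y]) * of z) := by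
    rw [map_mul, ← ofList_singleton z, ← ofList_append, List.append_assoc]
    exact h.trans hw.symm
  exact (inQ_iff_of_mk_mul_of_eq key).mpr (inQ_of_inL hL)

end Malcev
end

section
/- The monoid M_1 is not singly aligned: the set A_1M_1 ∩ dM_1 is nonempty, yet there is no r ∈ M_1 with A_1M_1 ∩ dM_1 = rM_1. -/
namespace Malcev

open FreeMonoid

/-- The additive weight on `M_1` induced by a weight on letters that respects the relations. -/
def weightHom (f : Letter 1 → ℕ) (hda : f .d + f .a = f (.A 0) + f (.C 0))
    (hAD : f (.A 0) + f (.D 0) = f .d + f .b) (hcb : f .c + f .b = f (.B 0) + f (.D 0)) :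
    Mn 1 →* Multiplicative ℕ :=
  (Mcon 1).lift (FreeMonoid.lift fun x => Multiplicative.ofAdd (f x)) <| by
    refine Con.conGen_le.2 ?_
    intro x y h
    change FreeMonoid.lift _ x = FreeMonoid.lift _ y
    cases h with
    | da h =>
      simp only [map_mul, FreeMonoid.lift_eval_of]
      exact congrArg Multiplicative.ofAdd hda
    | AD i h => omega
    | An h =>
      simp only [map_mul, FreeMonoid.lift_eval_of]
      exact congrArg Multiplicative.ofAdd hAD
    | cb h =>
      simp only [map_mul, FreeMonoid.lift_eval_of]
      exact congrArg Multiplicative.ofAdd hcb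
    | BC i h => omega

theorem weightHom_gen (f : Letter 1 → ℕ) (hda hAD hcb) (x : Letter 1) :
    weightHom f hda hAD hcb (gen x) = Multiplicative.ofAdd (f x) := rfl

/-- The word length on `M_1`, well defined since the relations are length-preserving. -/
def len : Mn 1 →* Multiplicative ℕ := weightHom (fun _ => 1) rfl rfl rfl

theorem len_gen (x : Letter 1) : (len (gen x)).toAdd = 1 := rfl

theorem eq_one_of_len_eq_zero {m : Mn 1} (h : (len m).toAdd = 0) : m = 1 := by
  obtain ⟨w, rfl⟩ := Con.mk'_surjective (c := Mcon 1) m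
  induction w using FreeMonoid.casesOn with
  | one => exact map_one _
  | of_mul x w =>
    rw [map_mul, map_mul, toAdd_mul] at h
    have : (len ((Mcon 1).mk' (FreeMonoid.of x))).toAdd = 1 := rfl
    omega

theorem gen_A_ne_gen_d : gen (Letter.A (0 : Fin 1)) ≠ gen .d := by
  intro h
  let f : Letter 1 → ℕ
    | .A _ | .a | .b | .B _ => 1
    | _ => 0
  have := congrArg (weightHom f rfl rfl rfl) h
  rw [weightHom_gen, weightHom_gen] at this
  exact one_ne_zero (Multiplicative.ofAdd.injective this)

theorem gen_d_mul_gen_a_ne : gen (.d : Letter 1) * gen .a ≠ gen .d * gen .b := by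
  intro h
  let f : Letter 1 → ℕ
    | .a | .C _ => 1
    | _ => 0
  have := congrArg (weightHom f rfl rfl rfl) h
  rw [map_mul, map_mul, weightHom_gen, weightHom_gen, weightHom_gen] at this
  exact one_ne_zero (Multiplicative.ofAdd.injective this)

theorem gen_d_mul_gen_a : gen (.d : Letter 1) * gen .a = gen (.A 0) * gen (.C 0) :=
  (Con.eq _).2 (ConGen.Rel.of _ _ (rel.da Nat.one_pos))

theorem gen_A_mul_gen_D : gen (.A (0 : Fin 1)) * gen (.D 0) = gen .d * gen .b :=
  (Con.eq _).2 (ConGen.Rel.of _ _ (rel.An Nat.one_pos))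

/-- `M_1` is not singly aligned, witnessed by `A_1M_1 ∩ dM_1`. -/
theorem M1_not_singly_aligned :
    (rIdeal (gen (Letter.A (0 : Fin 1))) ∩ rIdeal (gen (Letter.d : Letter 1))).Nonempty ∧
    ¬ ∃ r : Mn 1,
      rIdeal (gen (Letter.A (0 : Fin 1))) ∩ rIdeal (gen (Letter.d : Letter 1)) = rIdeal r := by
  have hda : gen .d * gen .a ∈
      rIdeal (gen (Letter.A (0 : Fin 1))) ∩ rIdeal (gen (Letter.d : Letter 1)) :=
    ⟨⟨_, gen_d_mul_gen_a⟩, ⟨_, rfl⟩⟩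
  have hdb : gen .d * gen .b ∈
      rIdeal (gen (Letter.A (0 : Fin 1))) ∩ rIdeal (gen (Letter.d : Letter 1)) :=
    ⟨⟨_, gen_A_mul_gen_D.symm⟩, ⟨_, rfl⟩⟩
  refine ⟨⟨_, hda⟩, ?_⟩
  rintro ⟨r, hr⟩
  obtain ⟨⟨x, hx⟩, ⟨y, hy⟩⟩ : r ∈ rIdeal (gen (Letter.A (0 : Fin 1))) ∩ rIdeal (gen .d) :=
    hr ▸ ⟨1, (mul_one r).symm⟩
  rw [hr] at hda hdb
  obtain ⟨m, hm⟩ := hda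
  obtain ⟨m', hm'⟩ := hdb
  have toAdd_len {u v : Mn 1} (h : u = v) : (len u).toAdd = (len v).toAdd := by rw [h]
  have lx := toAdd_len hx
  have ly := toAdd_len hy
  have lm := toAdd_len hm
  have lm' := toAdd_len hm'
  simp only [map_mul, toAdd_mul, len_gen] at lx ly lm lm'
  by_cases h : (len m).toAdd = 0
  · have h' : (len m').toAdd = 0 := by omega
    rw [eq_one_of_len_eq_zero h] at hm
    rw [eq_one_of_len_eq_zero h'] at hm'
    exact gen_d_mul_gen_a_ne (hm.trans hm'.symm)
  · have hx0 : (len x).toAdd = 0 := by omega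
    have hy0 : (len y).toAdd = 0 := by omega
    rw [eq_one_of_len_eq_zero hx0, mul_one] at hx
    rw [eq_one_of_len_eq_zero hy0, mul_one] at hy
    exact gen_A_ne_gen_d (hx.symm.trans hy)

end Malcev
end

section
/- The semigroup S_1 = Sgp⟨a, b, c, d, u, v, x, y | ax = by, au = bv, cx = dy⟩ is cancellative, and it is not group-embeddable: for every group G and every multiplicative homomorphism φ : S_1 → G, φ is not injective. -/
namespace Malcev

/-- The alphabet of Malcev's original semigroup: letters `a, b, c, d, u, v, x, y`. -/
inductive YLetter : Type
  | a | b | c | d | u | v | x | y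
  deriving DecidableEq

/-- The defining relations `σ = {(ax, by), (au, bv), (cx, dy)}`. -/
inductive srel : FreeSemigroup YLetter → FreeSemigroup YLetter → Prop
  | r1 : srel (.of .a * .of .x) (.of .b * .of .y)
  | r2 : srel (.of .a * .of .u) (.of .b * .of .v)
  | r3 : srel (.of .c * .of .x) (.of .d * .of .y)

/-- The presented semigroup `S_1 = Sgp⟨a, b, c, d, u, v, x, y | ax = by, au = bv, cx = dy⟩`. -/
abbrev S1 : Type := (conGen srel).Quotient

namespace S1

/-- The generator of `S_1` corresponding to a letter. -/
def of (p : YLetter) : S1 := ((FreeSemigroup.of p : FreeSemigroup YLetter) : S1)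

theorem of_a_mul_of_x : of .a * of .x = of .b * of .y :=
  (Con.eq _).2 (ConGen.Rel.of _ _ .r1)

theorem of_a_mul_of_u : of .a * of .u = of .b * of .v :=
  (Con.eq _).2 (ConGen.Rel.of _ _ .r2)

theorem of_c_mul_of_x : of .c * of .x = of .d * of .y :=
  (Con.eq _).2 (ConGen.Rel.of _ _ .r3)

theorem induction {C : S1 → Prop} (s : S1) (of : ∀ p, C (of p))
    (mul : ∀ p t, C (S1.of p) → C t → C (S1.of p * t)) : C s :=
  Con.induction_on s fun w => FreeSemigroup.recOnMul w of fun p w => mul p w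

/-- The universal property of `S_1`. -/
def lift {β : Type*} [Semigroup β] (f : YLetter → β) (hax : f .a * f .x = f .b * f .y)
    (hau : f .a * f .u = f .b * f .v) (hcx : f .c * f .x = f .d * f .y) : S1 →ₙ* β where
  toFun s := Con.liftOn s (FreeSemigroup.lift f) fun _ _ h =>
    (Con.conGen_le (c := Con.ker (FreeSemigroup.lift f))).2 (by
      rintro _ _ (_ | _ | _)
      · exact hax
      · exact hau
      · exact hcx) h
  map_mul' s t := Con.induction_on₂ s t fun w z => map_mul (FreeSemigroup.lift f) w z

/-- Left multiplication by a letter on normal forms of the rewriting system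
`ax → by`, `au → bv`, `cx → dy`. -/
def push : YLetter → List YLetter → List YLetter
  | .a, .x :: l => .b :: .y :: l
  | .a, .u :: l => .b :: .v :: l
  | .c, .x :: l => .d :: .y :: l
  | p, l => p :: l

theorem push_injective (p : YLetter) : Function.Injective (push p) := by
  intro l m h
  unfold push at h
  split at h <;> split at h <;> simp_all

/-- The left action of `S_1` on words by multiplication followed by rewriting. -/
def act : S1 →ₙ* Function.End (List YLetter) := lift push rfl rfl rfl

theorem act_of (p : YLetter) : act (of p) = push p := rfl

theorem act_mul_apply (s t : S1) (l : List YLetter) : act (s * t) l = act s (act t l) := by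
  rw [map_mul]
  rfl

theorem act_injective (s : S1) : Function.Injective (act s) := by
  induction s using induction with
  | of p => exact push_injective p
  | mul p t hp ht =>
    rw [map_mul]
    exact hp.comp ht

/-- The value of a possibly empty word, in `S_1` with an identity adjoined. -/
def eval (l : List YLetter) : WithOne S1 := (l.map fun p => (of p : WithOne S1)).prod

theorem eval_cons (p : YLetter) (l : List YLetter) : eval (p :: l) = of p * eval l := by
  simp [eval]

theorem eval_push (p : YLetter) (l : List YLetter) : eval (push p l) = of p * eval l := by
  unfold push
  split <;> simp only [eval_cons, ← mul_assoc, ← WithOne.coe_mul, of_a_mul_of_x, of_a_mul_of_u,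
    of_c_mul_of_x]

theorem eval_act (s : S1) (l : List YLetter) : eval (act s l) = s * eval l := by
  induction s using induction generalizing l with
  | of p => exact eval_push p l
  | mul p t hp ht => rw [act_mul_apply, hp, ht, WithOne.coe_mul, mul_assoc]

theorem act_nil_injective : Function.Injective fun s : S1 => act s [] := by
  intro s t h
  have h := congrArg eval h
  simp only [eval_act] at h
  simpa [eval] using h

theorem mul_left_cancel {s t r : S1} (h : r * s = r * t) : s = t := by
  apply act_nil_injective
  apply act_injective r
  simp only [← act_mul_apply, h]

/-- The involution of the alphabet carrying the reversed relations to the relations. -/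
def swap : YLetter → YLetter
  | .a => .x
  | .x => .a
  | .b => .y
  | .y => .b
  | .c => .u
  | .u => .c
  | .d => .v
  | .v => .d

/-- The involutive anti-automorphism of `S_1` induced by `swap`. -/
def reverse : S1 →ₙ* S1ᵐᵒᵖ :=
  lift (fun p => .op (of (swap p))) (congrArg MulOpposite.op of_a_mul_of_x)
    (congrArg MulOpposite.op of_c_mul_of_x) (congrArg MulOpposite.op of_a_mul_of_u)

theorem reverse_reverse (s : S1) : (reverse (reverse s).unop).unop = s := by
  induction s using induction with
  | of p => cases p <;> rfl
  | mul p t hp ht => simp only [map_mul, MulOpposite.unop_mul, hp, ht]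

theorem reverse_injective : Function.Injective reverse := fun s t h => by
  rw [← reverse_reverse s, h, reverse_reverse]

theorem mul_right_cancel {s t r : S1} (h : s * r = t * r) : s = t := by
  apply reverse_injective
  apply MulOpposite.unop_injective
  apply mul_left_cancel (r := (reverse r).unop)
  simp only [← MulOpposite.unop_mul, ← map_mul, h]

theorem of_c_mul_of_u_ne : of .c * of .u ≠ of .d * of .v := by
  intro h
  have h := congrArg (fun s => act s []) h
  simp [act_mul_apply, act_of, push] at h

/-- Malcev's quotient condition, valid in every group. -/
theorem malcev_condition {G : Type*} [Group G] {a b c d u v x y : G} (hax : a * x = b * y)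
    (hau : a * u = b * v) (hcx : c * x = d * y) : c * u = d * v := by
  have hyx : y * x⁻¹ = b⁻¹ * a := by
    rw [mul_inv_eq_iff_eq_mul, mul_assoc, hax, inv_mul_cancel_left]
  have hc : c = d * (y * x⁻¹) := by rw [← mul_assoc, ← hcx, mul_inv_cancel_right]
  rw [hc, hyx, mul_assoc, mul_assoc, hau, inv_mul_cancel_left]

end S1

/-- `S_1` is cancellative but not group-embeddable. -/
theorem S1_cancellative_not_embeddable :
    (∀ a b c : S1, (c * a = c * b → a = b) ∧ (a * c = b * c → a = b)) ∧
    (∀ (G : Type*) [Group G] (φ : S1 →ₙ* G), ¬ Function.Injective φ) := by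
  refine ⟨fun a b c => ⟨S1.mul_left_cancel, S1.mul_right_cancel⟩, fun G _ φ hφ => ?_⟩
  apply S1.of_c_mul_of_u_ne
  apply hφ
  rw [map_mul, map_mul]
  apply S1.malcev_condition (a := φ (S1.of .a)) (b := φ (S1.of .b)) (x := φ (S1.of .x))
    (y := φ (S1.of .y))
  · rw [← map_mul, ← map_mul, S1.of_a_mul_of_x]
  · rw [← map_mul, ← map_mul, S1.of_a_mul_of_u]
  · rw [← map_mul, ← map_mul, S1.of_c_mul_of_x]

end Malcev
end

section
/- For every integer n ≥ 1, the two-letter words ca and B_1C_1 are not equal in M_n, i.e. their images in M_n are distinct elements. -/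
namespace Malcev

open FreeMonoid

/-- The homomorphism `M_n → (ℕ, *)` sending `a` and `c` to `1` and every other letter to `0`. -/
def acIndicator (n : ℕ) : Mn n →* ℕ :=
  (Mcon n).lift (FreeMonoid.lift fun | .a => 1 | .c => 1 | _ => 0)
    (Con.conGen_le.mpr fun _ _ h => by cases h <;> simp [Con.ker_rel])

/-- the words `ca` and `B_1C_1` are not equal in `M_n`. -/
theorem Mn_ca_ne_B1C1 (n : ℕ) (hn : 1 ≤ n) :
    gen (Letter.c : Letter n) * gen (Letter.a : Letter n) ≠
      gen (Letter.B ⟨0, hn⟩) * gen (Letter.C ⟨0, hn⟩) := by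
  intro h
  have h' : (1 * 1 : ℕ) = 0 * 0 := congrArg (acIndicator n) h
  simp at h'

end Malcev
end
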